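/- The representation σ₁ of the binary icosahedral group is irreducible: there is no nonzero vector v ∈ ℂ² that is simultaneously an eigenvector of A₁ and of B₁ (i.e., there do not exist v ≠ 0 and λ, μ ∈ ℂ with A₁·v = λ·v and B₁·v = μ·v). -/

import Mathlib

noncomputable section

/-- `e₅ = exp(2πi/5)`. -/
def e5 : ℂ := Complex.exp (2 * Real.pi * Complex.I / 5)

/-- The matrix `A₁`, image of the generator `r` under the representation `σ₁`. -/
def A1 : Matrix (Fin 2) (Fin 2) ℂ :=
  (1/5 : ℂ) • !![-3*e5 - e5^2 + e5^3 - 2*e5^4, e5 - 3*e5^2 - 2*e5^3 - e5^4;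
                 e5 + 2*e5^2 + 3*e5^3 - e5^4, -2*e5 + e5^2 - e5^3 - 3*e5^4]

/-- The matrix `B₁`, image of the generator `s` under the representation `σ₁`. -/
def B1 : Matrix (Fin 2) (Fin 2) ℂ :=
  (1/5 : ℂ) • !![-e5 - 2*e5^2 - 3*e5^3 - 4*e5^4, 2*e5 - e5^2 + e5^3 - 2*e5^4;
                 2*e5 - e5^2 + e5^3 - 2*e5^4, -4*e5 - 3*e5^2 - 2*e5^3 - e5^4]

/-!
A common eigenvector of `A` and `B` is killed by the commutator `⁅A, B⁆`, so `det ⁅A, B⁆ = 0`.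
For `2 × 2` matrices this determinant is a polynomial in the determinants and traces of `A`, `B`
and the trace of `A * B` (Fricke's identity, usually stated in `SL₂` for
`tr (A B A⁻¹ B⁻¹) = 2 - det ⁅A, B⁆`). Here `det A₁ = det B₁ = tr B₁ = 1`, `tr (A₁ B₁) = 0`, and
`x = tr A₁` is a root of `x² = x + 1`, whence `det ⁅A₁, B₁⁆ = 3 - x² = 2 - x ≠ 0`.
-/

open Matrix

section CommonEigenvector

variable {n R : Type*} [Fintype n] [CommRing R] {A B : Matrix n n R} {v : n → R} {l m : R}

theorem lie_mulVec_eq_zero_of_common_eigenvector (hA : A *ᵥ v = l • v) (hB : B *ᵥ v = m • v) :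
    ⁅A, B⁆ *ᵥ v = 0 := by
  rw [Ring.lie_def, sub_mulVec, sub_eq_zero]
  calc (A * B) *ᵥ v = m • l • v := by rw [← mulVec_mulVec, hB, mulVec_smul, hA]
    _ = l • m • v := smul_comm m l v
    _ = (B * A) *ᵥ v := by rw [← mulVec_mulVec, hA, mulVec_smul, hB]

theorem det_lie_eq_zero_of_common_eigenvector [DecidableEq n] [IsDomain R] (hv : v ≠ 0)
    (hA : A *ᵥ v = l • v) (hB : B *ᵥ v = m • v) : det ⁅A, B⁆ = 0 :=
  exists_mulVec_eq_zero_iff.mp ⟨v, hv, lie_mulVec_eq_zero_of_common_eigenvector hA hB⟩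

end CommonEigenvector

theorem det_lie_fin_two {R : Type*} [CommRing R] (A B : Matrix (Fin 2) (Fin 2) R) :
    det ⁅A, B⁆ = 4 * A.det * B.det - A.trace ^ 2 * B.det - B.trace ^ 2 * A.det
      - (A * B).trace ^ 2 + A.trace * B.trace * (A * B).trace := by
  simp only [Ring.lie_def, det_fin_two, trace_fin_two, Matrix.sub_apply, mul_apply,
    Fin.sum_univ_two]
  ring

theorem isPrimitiveRoot_e5 : IsPrimitiveRoot e5 5 := by
  simpa [e5] using Complex.isPrimitiveRoot_exp 5 (by norm_num)

theorem e5_geom_sum_eq_zero : 1 + e5 + e5 ^ 2 + e5 ^ 3 + e5 ^ 4 = 0 := by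
  simpa [Finset.sum_range_succ] using isPrimitiveRoot_e5.geom_sum_eq_zero (by norm_num)

theorem det_A1 : A1.det = 1 := by
  rw [A1, det_smul, det_fin_two_of, Fintype.card_fin]
  grind [e5_geom_sum_eq_zero]

theorem det_B1 : B1.det = 1 := by
  rw [B1, det_smul, det_fin_two_of, Fintype.card_fin]
  grind [e5_geom_sum_eq_zero]

theorem trace_A1 : A1.trace = -(e5 + e5 ^ 4) := by
  rw [A1, trace_smul, trace_fin_two_of, smul_eq_mul]
  ring

theorem trace_A1_sq : A1.trace ^ 2 = A1.trace + 1 := by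
  rw [trace_A1]
  grind [e5_geom_sum_eq_zero]

theorem trace_B1 : B1.trace = 1 := by
  rw [B1, trace_smul, trace_fin_two_of, smul_eq_mul]
  linear_combination -e5_geom_sum_eq_zero

theorem trace_A1_mul_B1 : (A1 * B1).trace = 0 := by
  rw [A1, B1, smul_mul_smul_comm, mul_fin_two, trace_smul, trace_fin_two_of, smul_eq_mul]
  grind [e5_geom_sum_eq_zero]

theorem det_lie_A1_B1 : det ⁅A1, B1⁆ = 2 - A1.trace := by
  rw [det_lie_fin_two, det_A1, det_B1, trace_B1, trace_A1_mul_B1]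
  linear_combination -trace_A1_sq

theorem det_lie_A1_B1_ne_zero : det ⁅A1, B1⁆ ≠ 0 := by
  rw [det_lie_A1_B1, sub_ne_zero]
  intro two_eq_trace
  have four_eq_three : (2 : ℂ) ^ 2 = 2 + 1 := by simpa only [two_eq_trace] using trace_A1_sq
  norm_num at four_eq_three

/-- The representation `σ₁` of the binary icosahedral group is
irreducible: no nonzero vector `v ∈ ℂ²` is simultaneously an eigenvector of `A₁`
and of `B₁`. -/
theorem sigma1_irreducible :
    ¬ ∃ v : Fin 2 → ℂ, v ≠ 0 ∧
      ∃ l m : ℂ, A1.mulVec v = l • v ∧ B1.mulVec v = m • v := by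
  rintro ⟨v, hv, l, m, hA, hB⟩
  exact det_lie_A1_B1_ne_zero (det_lie_eq_zero_of_common_eigenvector hv hA hB)

end
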